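/- For every natural number p ≥ 5, setting r = p(p−1)/2, the number of non-chordal simple graphs on Fin p having exactly 5 edges equals 12 · C(p,5) + 3 · C(p,4) · (r − 6). (Paper's Lemma 2, part 3: F_{p,5} = binom(p,5)·12 + binom(p,4)·3·(r−6).) -/

import Mathlib

/-- A simple graph is chordal ("decomposable") if for every `n ≥ 4` there is no
graph embedding (induced subgraph copy) of the `n`-cycle into it. -/
def IsChordal {V : Type*} (G : SimpleGraph V) : Prop :=
  ∀ n : ℕ, 4 ≤ n → IsEmpty (SimpleGraph.cycleGraph n ↪g G)

/-- `Fcount p k` is the number of non-chordal simple graphs on `Fin p` with exactly `k` edges. -/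
noncomputable def Fcount (p k : ℕ) : ℕ :=
  Nat.card {G : SimpleGraph (Fin p) // G.edgeSet.ncard = k ∧ ¬ IsChordal G}

/-!
An induced cycle of a graph with 5 edges has length at most 5, so such a graph is non-chordal iff it
contains an induced `C₄` or `C₅`. A vertex of an induced cycle has degree at least 2, so if it lay
outside an induced `Cₙ` the graph would have at least `n + 2` edges. Hence, in a graph with 5 edges,
every induced cycle of length at least 4 has the same vertex set: the two cases exclude each other,
and the embeddings of `Cₙ` into the graph form a single orbit of the `2n` automorphisms of `Cₙ`. It
remains to count pairs of a graph on `p` vertices and an embedding of `Cₙ`: along each of the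
`p! / (p - n)!` injections, the graph is determined by its other `5 - n` edges, chosen freely among
the `C(p, 2) - C(n, 2)` pairs of vertices that do not both lie in the image.
-/

open SimpleGraph

variable {V W : Type*}

lemma ncard_edgeSet_map (f : W ↪ V) (H : SimpleGraph W) :
    (H.map f).edgeSet.ncard = H.edgeSet.ncard := by
  rw [edgeSet_map, Set.ncard_image_of_injective _ f.sym2Map.injective]

lemma ncard_edgeSet_top [Finite V] :
    (⊤ : SimpleGraph V).edgeSet.ncard = (Nat.card V).choose 2 := by
  classical
  have := Fintype.ofFinite V
  rw [← coe_edgeFinset, Set.ncard_coe_finset, card_edgeFinset_top_eq_card_choose_two,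
    Nat.card_eq_fintype_card]

lemma ncard_edgeSet_sup [Finite V] {G K : SimpleGraph V} (h : Disjoint G K) :
    (G ⊔ K).edgeSet.ncard = G.edgeSet.ncard + K.edgeSet.ncard := by
  rw [edgeSet_sup, Set.ncard_union_eq (disjoint_edgeSet.2 h)]

lemma ncard_edgeSet_compl [Finite V] (G : SimpleGraph V) :
    Gᶜ.edgeSet.ncard = (Nat.card V).choose 2 - G.edgeSet.ncard := by
  rw [← ncard_edgeSet_top, ← sup_compl_eq_top (x := G), ncard_edgeSet_sup disjoint_compl_right,
    Nat.add_sub_cancel_left]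

lemma ncard_setOf_le_and_ncard_edgeSet_eq [Finite V] (G : SimpleGraph V) (k : ℕ) :
    {D | D ≤ G ∧ D.edgeSet.ncard = k}.ncard = G.edgeSet.ncard.choose k := by
  rw [← Set.ncard_powerset_ncard G.edgeSet.toFinite,
    ← Set.ncard_image_of_injective _ edgeSet_injective]
  congr 1
  ext s
  constructor
  · rintro ⟨D, ⟨hDG, hD⟩, rfl⟩
    exact ⟨edgeSet_subset_edgeSet.2 hDG, hD⟩
  · rintro ⟨hsG, hs⟩
    have hsD : (fromEdgeSet s).edgeSet = s := by
      rw [edgeSet_fromEdgeSet, sdiff_eq_left]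
      exact Set.disjoint_left.2 fun e he ↦ G.edgeSet_subset_compl_diagSet (hsG he)
    exact ⟨fromEdgeSet s, ⟨edgeSet_subset_edgeSet.1 (hsD.trans_subset hsG), hsD.symm ▸ hs⟩, hsD⟩

lemma ncard_setOf_ncard_edgeSet_eq_and_inf_eq [Finite V] {K L : SimpleGraph V} (hLK : L ≤ K)
    (j : ℕ) :
    {G | G.edgeSet.ncard = L.edgeSet.ncard + j ∧ G ⊓ K = L}.ncard =
      Kᶜ.edgeSet.ncard.choose j := by
  rw [← ncard_setOf_le_and_ncard_edgeSet_eq]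
  refine Set.ncard_congr (fun G _ ↦ G \ K) ?_ ?_ ?_
  · rintro G ⟨hG, hGK⟩
    refine ⟨sdiff_eq.trans_le inf_le_right, ?_⟩
    rw [← sup_inf_sdiff G K, hGK, ncard_edgeSet_sup (hGK ▸ disjoint_inf_sdiff)] at hG
    exact Nat.add_left_cancel hG
  · rintro G G' ⟨-, hG⟩ ⟨-, hG'⟩ h
    rw [← sup_inf_sdiff G K, hG, h, ← hG', sup_inf_sdiff]
  · rintro D ⟨hDK, hD⟩
    have hdisj : Disjoint D K := le_compl_iff_disjoint_right.1 hDK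
    refine ⟨L ⊔ D, ⟨?_, ?_⟩, ?_⟩
    · rw [ncard_edgeSet_sup (hdisj.symm.mono_left hLK), hD]
    · rw [inf_sup_right, inf_eq_left.2 hLK, hdisj.eq_bot, sup_bot_eq]
    · rw [sup_sdiff, sdiff_eq_bot_iff.2 hLK, bot_sup_eq, hdisj.sdiff_eq_left]

lemma map_comap_eq_inf_map_top (f : W ↪ V) (G : SimpleGraph V) :
    (G.comap f).map f = G ⊓ (⊤ : SimpleGraph W).map f := by
  ext u v
  simp only [map_adj, comap_adj, inf_adj, top_adj]
  constructor
  · rintro ⟨a, b, h, rfl, rfl⟩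
    exact ⟨h, a, b, fun hab ↦ h.ne (congrArg f hab), rfl, rfl⟩
  · rintro ⟨h, a, b, -, rfl, rfl⟩
    exact ⟨a, b, h, rfl, rfl⟩

lemma comap_eq_iff_inf_map_top_eq {f : W ↪ V} {G : SimpleGraph V} {H : SimpleGraph W} :
    G.comap f = H ↔ G ⊓ (⊤ : SimpleGraph W).map f = H.map f := by
  rw [← map_comap_eq_inf_map_top, (map_injective f).eq_iff]

lemma ncard_setOf_ncard_edgeSet_eq_and_comap_eq [Finite V] [Finite W] (f : W ↪ V)
    (H : SimpleGraph W) (j : ℕ) :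
    {G : SimpleGraph V | G.edgeSet.ncard = H.edgeSet.ncard + j ∧ G.comap f = H}.ncard =
      ((Nat.card V).choose 2 - (Nat.card W).choose 2).choose j := by
  simp_rw [comap_eq_iff_inf_map_top_eq, ← ncard_edgeSet_map f H]
  rw [ncard_setOf_ncard_edgeSet_eq_and_inf_eq (map_monotone f le_top), ncard_edgeSet_compl,
    ncard_edgeSet_map, ncard_edgeSet_top]

/-- Double counting of the induced copies of `H` in the graphs satisfying `P`: such a copy is either
a graph together with an embedding of `H`, or an injection of vertices together with a graph that
pulls back to `H` along it. -/
def sigmaEmbeddingEquivSigmaComap (P : SimpleGraph V → Prop) (H : SimpleGraph W) :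
    (Σ G : {G : SimpleGraph V | P G ∧ H ⊴ G}, H ↪g G.1) ≃
      Σ f : W ↪ V, {G : SimpleGraph V | P G ∧ G.comap f = H} where
  toFun x := ⟨x.2.toEmbedding, x.1.1, x.1.2.1, x.2.comap_eq⟩
  invFun y :=
    have e : H ↪g y.2.1 := ⟨y.1, fun {a b} ↦ by rw [← comap_adj, y.2.2.2]⟩
    ⟨⟨y.2.1, y.2.2.1, ⟨e⟩⟩, e⟩
  left_inv _ := rfl
  right_inv _ := rfl

lemma card_embedding_eq_card_aut [Finite W] {H : SimpleGraph W} {G : SimpleGraph V} (f : H ↪g G)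
    (hf : ∀ g : H ↪g G, Set.range g ⊆ Set.range f) :
    Nat.card (H ↪g G) = Nat.card (H ≃g H) := by
  symm
  refine Nat.card_eq_of_bijective (fun σ ↦ f.comp σ.toEmbedding) ⟨fun σ τ h ↦ ?_, fun g ↦ ?_⟩
  · ext i : 1
    exact f.injective (DFunLike.congr_fun h i)
  · choose σ hσ using fun i ↦ hf g ⟨i, rfl⟩
    have hinj : σ.Injective := fun a b hab ↦ g.injective (by rw [← hσ, ← hσ, hab])
    have hadj (a b : W) : H.Adj (σ a) (σ b) ↔ H.Adj a b := by
      rw [← f.map_adj_iff, hσ, hσ, g.map_adj_iff]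
    exact ⟨⟨.ofBijective σ (Finite.injective_iff_bijective.1 hinj), hadj _ _⟩, RelEmbedding.ext hσ⟩

lemma ncard_setOf_isIndContained_mul_card_aut [Finite V] [Finite W] (H : SimpleGraph W) (j : ℕ)
    (hH : ∀ G : SimpleGraph V, G.edgeSet.ncard = H.edgeSet.ncard + j →
      ∀ f g : H ↪g G, Set.range g ⊆ Set.range f) :
    {G : SimpleGraph V | G.edgeSet.ncard = H.edgeSet.ncard + j ∧ H ⊴ G}.ncard *
        Nat.card (H ≃g H) =
      (Nat.card V).descFactorial (Nat.card W) *
        ((Nat.card V).choose 2 - (Nat.card W).choose 2).choose j := by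
  classical
  have := Fintype.ofFinite V
  have := Fintype.ofFinite W
  have (G : SimpleGraph V) : Finite (H ↪g G) := .of_injective _ DFunLike.coe_injective
  let P (G : SimpleGraph V) : Prop := G.edgeSet.ncard = H.edgeSet.ncard + j
  calc {G | P G ∧ H ⊴ G}.ncard * Nat.card (H ≃g H)
      = ∑ G : {G | P G ∧ H ⊴ G}, Nat.card (H ↪g G.1) := by
        rw [Finset.sum_congr rfl fun G _ ↦
          card_embedding_eq_card_aut G.2.2.some (hH G.1 G.2.1 G.2.2.some)]
        simp [← Nat.card_coe_set_eq]
    _ = ∑ f : W ↪ V, {G : SimpleGraph V | P G ∧ G.comap f = H}.ncard := by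
        rw [← Nat.card_sigma, Nat.card_congr (sigmaEmbeddingEquivSigmaComap P H), Nat.card_sigma]
        rfl
    _ = _ := by
        simp_rw [P, ncard_setOf_ncard_edgeSet_eq_and_comap_eq, Finset.sum_const, Finset.card_univ,
          Fintype.card_embedding_eq, Nat.card_eq_fintype_card, smul_eq_mul]

lemma ncard_edgeSet_le_of_isIndContained [Finite V] {H : SimpleGraph W} {G : SimpleGraph V}
    (h : H ⊴ G) : H.edgeSet.ncard ≤ G.edgeSet.ncard := by
  obtain ⟨f⟩ := h
  rw [← Set.ncard_image_of_injective _ (Sym2.map.injective f.injective)]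
  exact Set.ncard_le_ncard f.toHom.image_edgeSet_subset

lemma ncard_edgeSet_add_degree_le [Finite V] {H : SimpleGraph W} {G : SimpleGraph V} (f : H ↪g G)
    {v : V} (hv : v ∉ Set.range f) [Fintype (G.neighborSet v)] :
    H.edgeSet.ncard + G.degree v ≤ G.edgeSet.ncard := by
  classical
  have hdisj : Disjoint (Sym2.map f '' H.edgeSet) (G.incidenceSet v) := by
    rw [Set.disjoint_left]
    rintro _ ⟨e, -, rfl⟩ he
    obtain ⟨w, -, hw⟩ := Sym2.mem_map.1 he.2
    exact hv ⟨w, hw⟩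
  calc H.edgeSet.ncard + G.degree v
      = (Sym2.map f '' H.edgeSet ∪ G.incidenceSet v).ncard := by
        rw [Set.ncard_union_eq hdisj,
          Set.ncard_image_of_injective _ (Sym2.map.injective f.injective),
          Set.ncard_eq_toFinset_card' (G.incidenceSet v), Set.toFinset_card,
          card_incidenceSet_eq_degree]
    _ ≤ G.edgeSet.ncard :=
        Set.ncard_le_ncard
          (Set.union_subset f.toHom.image_edgeSet_subset (G.incidenceSet_subset v))

lemma range_subset_range_of_ncard_edgeSet_lt [Finite V] {U : Type*} {G : SimpleGraph V}
    {H : SimpleGraph W} {K : SimpleGraph U} [K.LocallyFinite] {d : ℕ} (hK : ∀ u, d ≤ K.degree u)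
    (hG : G.edgeSet.ncard < H.edgeSet.ncard + d) (f : H ↪g G) (g : K ↪g G) :
    Set.range g ⊆ Set.range f := by
  classical
  have := Fintype.ofFinite V
  rintro _ ⟨u, rfl⟩
  by_contra hu
  have hdeg : K.degree u ≤ G.degree (g u) := g.toCopy.degree_le u
  have := ncard_edgeSet_add_degree_le f hu
  have := hK u
  omega

lemma ncard_edgeSet_cycleGraph {n : ℕ} (hn : 3 ≤ n) : (cycleGraph n).edgeSet.ncard = n := by
  obtain ⟨n, rfl⟩ := Nat.exists_eq_add_of_le' hn
  have h := (cycleGraph (n + 3)).sum_degrees_eq_twice_card_edges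
  simp only [cycleGraph_degree_three_le, Finset.sum_const, Finset.card_univ, Fintype.card_fin,
    smul_eq_mul] at h
  rw [← coe_edgeFinset, Set.ncard_coe_finset]
  omega

lemma fin_one_add_one_ne_zero {n : ℕ} : (1 + 1 : Fin (n + 3)) ≠ 0 :=
  ne_of_beq_false rfl

open Fin.CommRing in
lemma cycleGraph_embedding_apply_of_sub_eq_one {n : ℕ}
    (σ : cycleGraph (n + 3) ↪g cycleGraph (n + 3)) (hσ : σ 1 - σ 0 = 1) (i : Fin (n + 3)) :
    σ i = σ 0 + i := by
  suffices h : ∀ k : ℕ, σ k = σ 0 + k ∧ σ (k + 1 : ℕ) = σ 0 + (k + 1 : ℕ) by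
    simpa using (h i).1
  intro k
  induction k with
  | zero => simpa [sub_eq_iff_eq_add'] using hσ
  | succ k ih =>
    refine ⟨ih.2, ?_⟩
    have hadj : (cycleGraph (n + 3)).Adj (σ (k + 1 + 1 : ℕ)) (σ (k + 1 : ℕ)) := by
      rw [σ.map_adj_iff, cycleGraph_adj]
      simp
    -- A step back would return to the value already taken at `k`.
    rcases cycleGraph_adj.1 hadj with hforward | hbackward
    · rw [sub_eq_iff_eq_add.1 hforward, ih.2]
      push_cast
      ring
    · have hσk : σ (k + 1 + 1 : ℕ) = σ k := by
        rw [ih.1, eq_sub_of_add_eq' (sub_eq_iff_eq_add.1 hbackward).symm, ih.2]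
        push_cast
        ring
      have hk := σ.injective hσk
      push_cast at hk
      exact absurd (by simpa [add_assoc] using hk) (fin_one_add_one_ne_zero (n := n))

/-- The rotation `i ↦ a + i` of a cycle graph. -/
def cycleGraphRotation {n : ℕ} (a : Fin (n + 3)) : cycleGraph (n + 3) ≃g cycleGraph (n + 3) where
  toEquiv := Equiv.addLeft a
  map_rel_iff' := by simp [cycleGraph_adj]

/-- The reflection `i ↦ a - i` of a cycle graph. -/
def cycleGraphReflection {n : ℕ} (a : Fin (n + 3)) : cycleGraph (n + 3) ≃g cycleGraph (n + 3) where
  toEquiv := Equiv.subLeft a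
  map_rel_iff' := by simp [cycleGraph_adj, or_comm]

lemma cycleGraphRotation_apply {n : ℕ} (a i : Fin (n + 3)) : cycleGraphRotation a i = a + i := rfl

lemma cycleGraphReflection_apply {n : ℕ} (a i : Fin (n + 3)) :
    cycleGraphReflection a i = a - i := rfl

lemma cycleGraph_aut_eq_rotation_or_reflection {n : ℕ}
    (σ : cycleGraph (n + 3) ≃g cycleGraph (n + 3)) :
    σ = cycleGraphRotation (σ 0) ∨ σ = cycleGraphReflection (σ 0) := by
  have hadj : (cycleGraph (n + 3)).Adj (σ 1) (σ 0) := by simp [σ.map_adj_iff, cycleGraph_adj]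
  rcases cycleGraph_adj.1 hadj with h | h
  · exact .inl (RelIso.ext (cycleGraph_embedding_apply_of_sub_eq_one σ.toEmbedding h))
  · refine .inr (RelIso.ext fun i ↦ ?_)
    have hneg : -σ i = -σ 0 + i := by
      simpa [cycleGraphReflection_apply] using cycleGraph_embedding_apply_of_sub_eq_one
        (Iso.toEmbedding (σ.trans (cycleGraphReflection 0)))
        (by simpa [cycleGraphReflection_apply, neg_add_eq_sub] using h) i
    rw [cycleGraphReflection_apply, ← neg_inj, hneg, neg_sub, neg_add_eq_sub]

lemma card_aut_cycleGraph {n : ℕ} (hn : 3 ≤ n) :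
    Nat.card (cycleGraph n ≃g cycleGraph n) = 2 * n := by
  obtain ⟨n, rfl⟩ := Nat.exists_eq_add_of_le' hn
  have hrotation : (cycleGraphRotation (n := n)).Injective := fun a b h ↦ by
    simpa [cycleGraphRotation_apply] using DFunLike.congr_fun h 0
  have hreflection : (cycleGraphReflection (n := n)).Injective := fun a b h ↦ by
    simpa [cycleGraphReflection_apply] using DFunLike.congr_fun h 0
  have hne (a b : Fin (n + 3)) : cycleGraphRotation a ≠ cycleGraphReflection b := fun h ↦ by
    have hzero : a = b := by
      simpa [cycleGraphRotation_apply, cycleGraphReflection_apply] using DFunLike.congr_fun h 0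
    have hone : a + 1 = b - 1 := DFunLike.congr_fun h 1
    rw [hzero, eq_sub_iff_add_eq, add_assoc, add_eq_left] at hone
    exact fin_one_add_one_ne_zero hone
  have hsurj (σ : cycleGraph (n + 3) ≃g cycleGraph (n + 3)) :
      ∃ x, Sum.elim cycleGraphRotation cycleGraphReflection x = σ :=
    (cycleGraph_aut_eq_rotation_or_reflection σ).elim (fun h ↦ ⟨.inl _, h.symm⟩)
      fun h ↦ ⟨.inr _, h.symm⟩
  rw [← Nat.card_eq_of_bijective _ ⟨hrotation.sumElim hreflection hne, hsurj⟩, Nat.card_sum,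
    Nat.card_fin, two_mul]

lemma range_subset_range_of_cycleGraph [Finite V] {G : SimpleGraph V} {n m : ℕ} (hn : 3 ≤ n)
    (hm : 3 ≤ m) (hG : G.edgeSet.ncard < n + 2) (f : cycleGraph n ↪g G) (g : cycleGraph m ↪g G) :
    Set.range g ⊆ Set.range f := by
  obtain ⟨m, rfl⟩ := Nat.exists_eq_add_of_le' hm
  exact range_subset_range_of_ncard_edgeSet_lt (fun _ ↦ cycleGraph_degree_three_le.ge)
    (by rwa [ncard_edgeSet_cycleGraph hn]) f g

lemma le_of_cycleGraph_isIndContained [Finite V] {G : SimpleGraph V} {n m : ℕ} (hn : 3 ≤ n)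
    (hm : 3 ≤ m) (hG : G.edgeSet.ncard < n + 2) (hnG : cycleGraph n ⊴ G) (hmG : cycleGraph m ⊴ G) :
    m ≤ n := by
  obtain ⟨⟨f⟩, ⟨g⟩⟩ := hnG, hmG
  simpa [Set.ncard_range_of_injective f.injective, Set.ncard_range_of_injective g.injective] using
    Set.ncard_le_ncard (range_subset_range_of_cycleGraph hn hm hG f g)

lemma ncard_setOf_cycleGraph_isIndContained_mul (V : Type*) [Finite V] {n j : ℕ}
    (hn : 3 ≤ n) (hj : j < 2) :
    {G : SimpleGraph V | G.edgeSet.ncard = n + j ∧ cycleGraph n ⊴ G}.ncard * (2 * n) =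
      (Nat.card V).descFactorial n * ((Nat.card V).choose 2 - n.choose 2).choose j := by
  have h := ncard_setOf_isIndContained_mul_card_aut (V := V) (cycleGraph n) j fun G hG ↦
    range_subset_range_of_cycleGraph hn hn (by rw [hG, ncard_edgeSet_cycleGraph hn]; omega)
  rwa [card_aut_cycleGraph hn, ncard_edgeSet_cycleGraph hn, Nat.card_fin] at h

lemma not_isChordal_iff [Finite V] {G : SimpleGraph V} :
    ¬ IsChordal G ↔ ∃ n ∈ Finset.Icc 4 G.edgeSet.ncard, cycleGraph n ⊴ G := by
  simp only [IsChordal, not_forall, not_isEmpty_iff, exists_prop, Finset.mem_Icc]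
  refine exists_congr fun n ↦ ⟨fun ⟨hn, h⟩ ↦ ⟨⟨hn, ?_⟩, h⟩, fun ⟨hn, h⟩ ↦ ⟨hn.1, h⟩⟩
  exact (ncard_edgeSet_cycleGraph (by omega)).symm.trans_le (ncard_edgeSet_le_of_isIndContained h)

theorem F_p_five_general (V : Type*) [Finite V] :
    Nat.card {G : SimpleGraph V // G.edgeSet.ncard = 5 ∧ ¬ IsChordal G} =
      12 * (Nat.card V).choose 5 + 3 * (Nat.card V).choose 4 * ((Nat.card V).choose 2 - 6) := by
  have hunion : {G : SimpleGraph V | G.edgeSet.ncard = 5 ∧ ¬ IsChordal G} =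
      {G | G.edgeSet.ncard = 5 + 0 ∧ cycleGraph 5 ⊴ G} ∪
        {G | G.edgeSet.ncard = 4 + 1 ∧ cycleGraph 4 ⊴ G} := by
    ext G
    simp only [not_isChordal_iff, Set.mem_union, Set.mem_ofPred_eq, ← and_or_left]
    refine and_congr_right fun hG ↦ ?_
    rw [hG, show Finset.Icc 4 5 = ({5, 4} : Finset ℕ) by decide]
    simp
  have hdisj : Disjoint {G : SimpleGraph V | G.edgeSet.ncard = 5 + 0 ∧ cycleGraph 5 ⊴ G}
      {G | G.edgeSet.ncard = 4 + 1 ∧ cycleGraph 4 ⊴ G} :=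
    Set.disjoint_left.2 fun G ⟨_, h5⟩ ⟨hG, h4⟩ ↦ absurd
      (le_of_cycleGraph_isIndContained (by simp) (by simp) (hG.trans_lt (by simp)) h4 h5) (by simp)
  have h5 := ncard_setOf_cycleGraph_isIndContained_mul V (n := 5) (j := 0) (by simp) (by simp)
  have h4 := ncard_setOf_cycleGraph_isIndContained_mul V (n := 4) (j := 1) (by simp) (by simp)
  rw [← Set.coe_ofPred, Nat.card_coe_set_eq, hunion, Set.ncard_union_eq hdisj]
  rw [Nat.descFactorial_eq_factorial_mul_choose, show Nat.factorial 5 = 120 from rfl,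
    Nat.choose_zero_right] at h5
  rw [Nat.descFactorial_eq_factorial_mul_choose, show Nat.factorial 4 = 24 from rfl,
    Nat.choose_one_right, show Nat.choose 4 2 = 6 from rfl, mul_assoc] at h4
  rw [mul_assoc 3]
  omega

theorem F_p_five (p : ℕ) (hp : 5 ≤ p) (r : ℕ) (hr : r = p * (p - 1) / 2) :
    Fcount p 5 = 12 * Nat.choose p 5 + 3 * Nat.choose p 4 * (r - 6) := by
  rw [hr, ← Nat.choose_two_right, Fcount, F_p_five_general, Nat.card_fin]
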